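/- Periodic minimum problem, small domains, small volume fraction: let τ ∈ (0,1), 0 < L ≤ min{τ, 1−τ} and 0 < σ < L. Then 4√(σL) is the least element of the set of values E^{#}_τ(v) as v ranges over Adm(L,σ): every v ∈ Adm(L,σ) satisfies E^{#}_τ(v) ≥ 4√(σL), and the function v = √(σL)·χ_{(s, s+√(σL))} attains this value for any 0 ≤ s ≤ L − √(σL). -/

import Mathlib

open MeasureTheory Filter Set

noncomputable section

/-- `Adm L σ v` : `v` is admissible, i.e. `0 ≤ v ≤ 1` on `(0,L)`, `v` has finite pointwise
total variation on `(0,L)` and `∫_{(0,L)} v = σL`. -/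
def Adm (L σ : ℝ) (v : ℝ → ℝ) : Prop :=
  (∀ x ∈ Set.Ioo 0 L, 0 ≤ v x ∧ v x ≤ 1) ∧
  BoundedVariationOn v (Set.Ioo 0 L) ∧
  (∫ x in Set.Ioo 0 L, v x) = σ * L

/-- The interior part of the limit functional:
`2·λ({x ∈ (0,L) : 0 < v(x) < 1}) + Var(v;(0,L))`. -/
def Fvol (L : ℝ) (v : ℝ → ℝ) : ℝ :=
  2 * (volume {x ∈ Set.Ioo 0 L | 0 < v x ∧ v x < 1}).toReal +
    (eVariationOn v (Set.Ioo 0 L)).toReal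

/-- The boundary term `φ_τ(x,y) = λ( [0,1] ∩ ( ([−τ,x−τ] ∪ [1−τ,x+1−τ]) Δ [0,y] ) )`. -/
def phi (τ x y : ℝ) : ℝ :=
  (volume (Set.Icc (0 : ℝ) 1 ∩
    symmDiff (Set.Icc (-τ) (x - τ) ∪ Set.Icc (1 - τ) (x + 1 - τ)) (Set.Icc 0 y))).toReal

/-!
Think of `v x` as the fraction of the vertical period occupied above `x`. Let `m` be the measure
of the set where `0 < v < 1` and let `T` be half the variation of `v` over one period, counting the
boundary term `φ_τ` as the jump across the seam. The energy is `2 (m + T)`. If `v ≤ T < 1`, then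
`v` vanishes off a set of measure `m`, so that `∫ v ≤ m T`, and AM-GM gives the energy `4 √(σ L)` of
a square. The other possibilities are `1 - v ≤ T < 1`, which gives the energy of a square hole,
`1 ≤ T`, and `0 < v < 1` everywhere with `min τ (1 - τ) ≤ T`. Hence the energy is bounded below by
the cheapest of four competitors, and for small `L` and `σ` this is the square.
-/

open scoped Topology symmDiff

section Variation

variable {α E : Type*} [LinearOrder α] [PseudoEMetricSpace E] {f : α → E} {a b : E}

lemma edist_le_eVariationOn_of_tendsto {F : Filter α} [F.NeBot] {s : Set α} {x : α}
    (hf : Tendsto f F (𝓝 a)) (hs : s ∈ F) (hx : x ∈ s) : edist a (f x) ≤ eVariationOn f s :=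
  le_of_tendsto (hf.edist tendsto_const_nhds) <| by
    filter_upwards [hs] with p hp using eVariationOn.edist_le f hp hx

lemma eVariationOn_Ioo_eq_Ioc_add_Icc_add_Ico {l u x y : α} (hlx : l < x) (hxy : x ≤ y)
    (hyu : y < u) :
    eVariationOn f (Ioo l u) =
      eVariationOn f (Ioc l x) + eVariationOn f (Icc x y) + eVariationOn f (Ico y u) := by
  rw [← eVariationOn.union f (isGreatest_Ioc hlx) (isLeast_Icc hxy),
    Ioc_union_Icc_eq_Ioc hlx hxy,
    ← eVariationOn.union f (isGreatest_Ioc (hlx.trans_le hxy)) (isLeast_Ico hyu),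
    Ioc_union_Ico_eq_Ioo (hlx.trans_le hxy) hyu]

variable [TopologicalSpace α] [OrderTopology α] [DenselyOrdered α] {l u : α}

lemma edist_add_edist_add_edist_le_eVariationOn_Ioo
    (ha : Tendsto f (𝓝[Ioo l u] l) (𝓝 a)) (hb : Tendsto f (𝓝[Ioo l u] u) (𝓝 b))
    {x y : α} (hx : x ∈ Ioo l u) (hy : y ∈ Ioo l u) (hxy : x ≤ y) :
    edist a (f x) + edist (f x) (f y) + edist (f y) b ≤ eVariationOn f (Ioo l u) := by
  have hlu : l < u := hx.1.trans hx.2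
  have := left_nhdsWithin_Ioo_neBot hlu
  have := right_nhdsWithin_Ioo_neBot hlu
  have hmem_left : Ioc l x ∈ 𝓝[Ioo l u] l := by
    filter_upwards [self_mem_nhdsWithin, nhdsWithin_le_nhds (Iio_mem_nhds hx.1)] with p hp hpx
    exact ⟨hp.1, (mem_Iio.mp hpx).le⟩
  have hmem_right : Ico y u ∈ 𝓝[Ioo l u] u := by
    filter_upwards [self_mem_nhdsWithin, nhdsWithin_le_nhds (Ioi_mem_nhds hy.2)] with p hp hyp
    exact ⟨(mem_Ioi.mp hyp).le, hp.2⟩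
  rw [eVariationOn_Ioo_eq_Ioc_add_Icc_add_Ico hx.1 hxy hy.2, edist_comm (f y)]
  gcongr
  · exact edist_le_eVariationOn_of_tendsto ha hmem_left ⟨hx.1, le_rfl⟩
  · exact eVariationOn.edist_le f ⟨le_rfl, hxy⟩ ⟨hxy, le_rfl⟩
  · exact edist_le_eVariationOn_of_tendsto hb hmem_right ⟨le_rfl, hy.2⟩

lemma eVariationOn_Icc_eq_Ioo_add_edist_add_edist (hlu : l < u)
    (ha : Tendsto f (𝓝[Ioo l u] l) (𝓝 a)) (hb : Tendsto f (𝓝[Ioo l u] u) (𝓝 b)) :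
    eVariationOn f (Icc l u) = eVariationOn f (Ioo l u) + edist (f l) a + edist (f u) b := by
  have hleft : Iio u ∩ Ioi l = Ioo l u := by rw [inter_comm, Ioi_inter_Iio]
  have hright : Ici l ∩ Iio u = Ico l u := Ici_inter_Iio
  have := left_nhdsWithin_Ioo_neBot hlu
  have : (𝓝[Ico l u] u).NeBot := right_nhdsWithin_Ico_neBot hlu
  have hb' : Tendsto f (𝓝[Ico l u] u) (𝓝 b) := by
    rwa [nhdsWithin_Ico_eq_nhdsLT hlu, ← nhdsWithin_Ioo_eq_nhdsLT hlu]
  have h₁ := eVariationOn.eVariationOn_on_inter_Ici_eq_Ioi_add_edist (s := Iio u) (f := f)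
    (by rwa [hleft]) hlu (by rwa [hleft])
  have h₂ := eVariationOn.eVariationOn_on_inter_Iic_eq_Iio_add_edist (s := Ici l) (f := f)
    (by rwa [hright]) hlu.le (by rwa [hright])
  rw [hleft, inter_comm, Ici_inter_Iio] at h₁
  rw [hright, Ici_inter_Iic] at h₂
  rw [h₂, h₁]

end Variation

section RealVariation

variable {α : Type*} [LinearOrder α] {f : α → ℝ}

lemma eVariationOn_inter_Icc_of_antitoneOn {s : Set α} {a b : α} (hf : AntitoneOn f s)
    (ha : a ∈ s) (hb : b ∈ s) :
    eVariationOn f (s ∩ Icc a b) = ENNReal.ofReal (f a - f b) := by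
  have hdual := MonotoneOn.eVariationOn_eq (s := OrderDual.ofDual ⁻¹' s)
    (a := OrderDual.toDual b) (b := OrderDual.toDual a) hf.dual_left hb ha
  rwa [Icc_toDual, ← preimage_inter, eVariationOn.comp_ofDual] at hdual

lemma eVariationOn_Icc_of_monotoneOn_of_antitoneOn {l c u : α} (hlc : l ≤ c) (hcu : c ≤ u)
    (hmono : MonotoneOn f (Icc l c)) (hanti : AntitoneOn f (Icc c u)) :
    eVariationOn f (Icc l u) = ENNReal.ofReal (f c - f l) + ENNReal.ofReal (f c - f u) := by
  rw [← Icc_union_Icc_eq_Icc hlc hcu, eVariationOn.union f (isGreatest_Icc hlc) (isLeast_Icc hcu),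
    ← hmono.eVariationOn_eq (left_mem_Icc.mpr hlc) (right_mem_Icc.mpr hlc),
    ← eVariationOn_inter_Icc_of_antitoneOn hanti (left_mem_Icc.mpr hcu) (right_mem_Icc.mpr hcu),
    inter_self, inter_self]

lemma aemeasurable_restrict_of_locallyBoundedVariationOn [TopologicalSpace α]
    [OrderClosedTopology α] [MeasurableSpace α] [BorelSpace α] {μ : Measure α} {s : Set α}
    (hf : LocallyBoundedVariationOn f s) (hs : MeasurableSet s) :
    AEMeasurable f (μ.restrict s) := by
  obtain ⟨p, q, hp, hq, rfl⟩ := hf.exists_monotoneOn_sub_monotoneOn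
  exact (aemeasurable_restrict_of_monotoneOn hs hp).sub (aemeasurable_restrict_of_monotoneOn hs hq)

end RealVariation

section Measure

variable {α : Type*} [MeasurableSpace α] {μ : Measure α}

lemma integral_le_mul_measureReal {f : α → ℝ} {s : Set α} {c : ℝ} (hc : 0 ≤ c)
    (hs : ∀ x ∈ s, f x ≤ c) (hsc : ∀ x ∉ s, f x ≤ 0) (hμs : μ s ≠ ⊤) :
    ∫ x, f x ∂μ ≤ c * μ.real s := by
  rcases hc.eq_or_lt with rfl | hc
  · rw [zero_mul]
    exact integral_nonpos fun x ↦ by by_cases hx : x ∈ s <;> simp_all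
  · have h : ENNReal.ofReal (∫ x, f x / c ∂μ) ≤ μ s :=
      integral_le_measure (fun x hx ↦ (div_le_one hc).mpr (hs x hx))
        (fun x hx ↦ div_nonpos_of_nonpos_of_nonneg (hsc x hx) hc.le)
    rw [integral_div, ENNReal.ofReal_le_iff_le_toReal hμs, div_le_iff₀' hc] at h
    exact h

lemma measureReal_symmDiff_eq_add_sub {s t : Set α} (hs : MeasurableSet s) (ht : MeasurableSet t)
    (hμs : μ s ≠ ⊤) (hμt : μ t ≠ ⊤) :
    μ.real (s ∆ t) = μ.real s + μ.real t - 2 * μ.real (s ∩ t) := by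
  have h₁ := measureReal_sdiff_add_inter (μ := μ) (s := s) ht hμs
  have h₂ := measureReal_sdiff_add_inter (μ := μ) (s := t) hs hμt
  rw [inter_comm] at h₂
  rw [measureReal_symmDiff_eq hs ht hμs hμt]
  linarith

end Measure

lemma two_mul_sqrt_le_add {c x y : ℝ} (hx : 0 ≤ x) (hy : 0 ≤ y) (hc : c ≤ x * y) :
    2 * √c ≤ x + y := by
  have : √c ≤ (x + y) / 2 :=
    Real.sqrt_le_iff.mpr ⟨by positivity, by linarith [four_mul_le_sq_add x y]⟩
  linarith

section BoundaryTerm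

variable {τ x y : ℝ}

/-- The interval `[-τ, x - τ]` wrapped around the circle `ℝ / ℤ`, with `[0,1]` as fundamental
domain: the first of the two sets compared by `phi τ x y`. -/
def wrappedIcc (τ x : ℝ) : Set ℝ :=
  Icc 0 1 ∩ (Icc (-τ) (x - τ) ∪ Icc (1 - τ) (x + 1 - τ))

lemma measurableSet_wrappedIcc : MeasurableSet (wrappedIcc τ x) :=
  measurableSet_Icc.inter (measurableSet_Icc.union measurableSet_Icc)

lemma volume_wrappedIcc_ne_top : volume (wrappedIcc τ x) ≠ ⊤ :=
  measure_ne_top_of_subset inter_subset_left measure_Icc_lt_top.ne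

lemma volume_real_wrappedIcc (hτ : τ ∈ Icc (0 : ℝ) 1) (hx : x ∈ Icc (0 : ℝ) 1) :
    volume.real (wrappedIcc τ x) = x := by
  obtain ⟨hτ0, hτ1⟩ := hτ
  obtain ⟨hx0, hx1⟩ := hx
  have h := measureReal_union_add_inter (μ := volume) (s := Icc 0 (x - τ))
    (t := Icc (1 - τ) (min 1 (x + 1 - τ))) measurableSet_Icc
    measure_Icc_lt_top.ne measure_Icc_lt_top.ne
  have hsplit : wrappedIcc τ x = Icc 0 (x - τ) ∪ Icc (1 - τ) (min 1 (x + 1 - τ)) := by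
    rw [wrappedIcc, inter_union_distrib_left, Icc_inter_Icc, Icc_inter_Icc,
      max_eq_left (by linarith), min_eq_right (by linarith), max_eq_right (by linarith)]
  rw [Icc_inter_Icc, Real.volume_real_Icc, Real.volume_real_Icc, Real.volume_real_Icc] at h
  rw [hsplit]
  grind

lemma phi_eq_add_sub (hτ : τ ∈ Icc (0 : ℝ) 1) (hx : x ∈ Icc (0 : ℝ) 1) (hy : y ∈ Icc (0 : ℝ) 1) :
    phi τ x y = x + y - 2 * volume.real (wrappedIcc τ x ∩ Icc 0 y) := by
  have hsymm : phi τ x y = volume.real (wrappedIcc τ x ∆ Icc 0 y) := by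
    rw [phi, inter_symmDiff_distrib_left, inter_eq_right.mpr (Icc_subset_Icc_right hy.2)]
    rfl
  rw [hsymm, measureReal_symmDiff_eq_add_sub measurableSet_wrappedIcc measurableSet_Icc
    volume_wrappedIcc_ne_top measure_Icc_lt_top.ne, volume_real_wrappedIcc hτ hx,
    Real.volume_real_Icc_of_le hy.1, sub_zero]

lemma phi_le_add (hτ : τ ∈ Icc (0 : ℝ) 1) (hx : x ∈ Icc (0 : ℝ) 1) (hy : y ∈ Icc (0 : ℝ) 1) :
    phi τ x y ≤ x + y := by
  rw [phi_eq_add_sub hτ hx hy]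
  linarith [measureReal_nonneg (μ := volume) (s := wrappedIcc τ x ∩ Icc 0 y)]

lemma abs_sub_le_phi (hτ : τ ∈ Icc (0 : ℝ) 1) (hx : x ∈ Icc (0 : ℝ) 1) (hy : y ∈ Icc (0 : ℝ) 1) :
    |x - y| ≤ phi τ x y := by
  have hle_x : volume.real (wrappedIcc τ x ∩ Icc 0 y) ≤ x :=
    (measureReal_mono inter_subset_left volume_wrappedIcc_ne_top).trans_eq
      (volume_real_wrappedIcc hτ hx)
  have hle_y : volume.real (wrappedIcc τ x ∩ Icc 0 y) ≤ y :=
    (measureReal_mono inter_subset_right measure_Icc_lt_top.ne).trans_eq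
      (by rw [Real.volume_real_Icc_of_le hy.1, sub_zero])
  rw [phi_eq_add_sub hτ hx hy, abs_le]
  constructor <;> linarith

lemma add_sub_overlap_le_phi (hτ : τ ∈ Icc (0 : ℝ) 1) (hx : x ∈ Icc (0 : ℝ) 1)
    (hy : y ∈ Icc (0 : ℝ) 1) :
    x + y - 2 * max (x - τ) 0 - 2 * max (y - (1 - τ)) 0 ≤ phi τ x y := by
  have hsub : wrappedIcc τ x ∩ Icc 0 y ⊆ Icc 0 (x - τ) ∪ Icc (1 - τ) y := by
    rintro z ⟨⟨-, hz | hz⟩, hzy⟩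
    · exact Or.inl ⟨hzy.1, hz.2⟩
    · exact Or.inr ⟨hz.1, hzy.2⟩
  have hoverlap : volume.real (wrappedIcc τ x ∩ Icc 0 y)
      ≤ max (x - τ) 0 + max (y - (1 - τ)) 0 := by
    have hfin := measure_union_lt_top (μ := volume) (s := Icc 0 (x - τ)) (t := Icc (1 - τ) y)
      measure_Icc_lt_top measure_Icc_lt_top
    refine (measureReal_mono hsub hfin.ne).trans ((measureReal_union_le _ _).trans_eq ?_)
    rw [Real.volume_real_Icc, Real.volume_real_Icc, sub_zero]
  rw [phi_eq_add_sub hτ hx hy]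
  linarith

end BoundaryTerm

/-- The set where the vertical slice above `x` is neither empty nor full; twice its measure is the
first term of `Fvol L v`. -/
def transitionSet (L : ℝ) (v : ℝ → ℝ) : Set ℝ :=
  {x ∈ Ioo 0 L | 0 < v x ∧ v x < 1}

/-- Half the variation of `v` over one period, where `phi τ a b` counts as the jump across the
seam between the boundary values `b = v(L⁻)` and `a = v(0⁺)`. -/
def halfVariation (τ L a b : ℝ) (v : ℝ → ℝ) : ℝ :=
  ((eVariationOn v (Ioo 0 L)).toReal + phi τ a b) / 2

lemma Fvol_add_phi_eq (τ L a b : ℝ) (v : ℝ → ℝ) :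
    Fvol L v + phi τ a b =
      2 * (volume.real (transitionSet L v) + halfVariation τ L a b v) := by
  simp only [Fvol, transitionSet, halfVariation, measureReal_def]
  ring

lemma halfVariation_nonneg (τ L a b : ℝ) (v : ℝ → ℝ) : 0 ≤ halfVariation τ L a b v := by
  rw [halfVariation, phi]
  positivity

lemma transitionSet_one_sub (L : ℝ) (v : ℝ → ℝ) :
    transitionSet L (fun x ↦ 1 - v x) = transitionSet L v := by
  ext x
  simp only [transitionSet, mem_ofPred_eq, sub_pos, sub_lt_self_iff, and_comm]

lemma setIntegral_le_mul_volume_transitionSet {L c : ℝ} {v : ℝ → ℝ} (hc0 : 0 ≤ c) (hc1 : c < 1)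
    (hv : ∀ x ∈ Ioo 0 L, v x ≤ c) :
    ∫ x in Ioo 0 L, v x ≤ c * volume.real (transitionSet L v) := by
  rw [← integral_indicator measurableSet_Ioo]
  refine integral_le_mul_measureReal hc0 (fun x hx ↦ ?_) (fun x hx ↦ ?_)
    (measure_ne_top_of_subset (sep_subset _ _) measure_Ioo_lt_top.ne)
  · rw [indicator_of_mem hx.1]
    exact hv x hx.1
  · refine indicator_apply_le' (fun hxL ↦ ?_) fun _ ↦ le_rfl
    by_contra! hpos
    exact hx ⟨hxL, hpos, (hv x hxL).trans_lt hc1⟩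

namespace Adm

variable {τ σ L a b c : ℝ} {v : ℝ → ℝ}

lemma integrableOn (hv : Adm L σ v) : IntegrableOn v (Ioo 0 L) := by
  have hmeas : AEMeasurable v (volume.restrict (Ioo 0 L)) :=
    aemeasurable_restrict_of_locallyBoundedVariationOn hv.2.1.locallyBoundedVariationOn
      measurableSet_Ioo
  refine Integrable.of_bound hmeas.aestronglyMeasurable 1
    ((ae_restrict_iff' measurableSet_Ioo).mpr (.of_forall fun x hx ↦ ?_))
  rw [Real.norm_of_nonneg (hv.1 x hx).1]
  exact (hv.1 x hx).2

lemma setIntegral_one_sub (hv : Adm L σ v) (hL : 0 ≤ L) :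
    ∫ x in Ioo 0 L, (1 - v x) = (1 - σ) * L := by
  rw [integral_sub (integrable_const _) hv.integrableOn, hv.2.2,
    setIntegral_const, Real.volume_real_Ioo_of_le hL, smul_eq_mul]
  ring

lemma transitionSet_eq_Ioo (hv : Adm L σ v) (h0 : ∀ x ∈ Ioo 0 L, v x ≠ 0)
    (h1 : ∀ x ∈ Ioo 0 L, v x ≠ 1) : transitionSet L v = Ioo 0 L :=
  sep_eq_self_iff_mem_true.mpr fun x hx ↦
    ⟨(hv.1 x hx).1.lt_of_ne' (h0 x hx), (hv.1 x hx).2.lt_of_ne (h1 x hx)⟩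

lemma two_mul_sqrt_le_of_le (hv : Adm L σ v) (hc0 : 0 ≤ c) (hc1 : c < 1)
    (hvc : ∀ x ∈ Ioo 0 L, v x ≤ c) :
    2 * √(σ * L) ≤ volume.real (transitionSet L v) + c := by
  have harea := setIntegral_le_mul_volume_transitionSet hc0 hc1 hvc
  rw [hv.2.2] at harea
  rw [add_comm]
  exact two_mul_sqrt_le_add hc0 measureReal_nonneg harea

lemma two_mul_sqrt_one_sub_le_of_one_sub_le (hv : Adm L σ v) (hL : 0 ≤ L) (hc0 : 0 ≤ c)
    (hc1 : c < 1) (hvc : ∀ x ∈ Ioo 0 L, 1 - v x ≤ c) :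
    2 * √((1 - σ) * L) ≤ volume.real (transitionSet L v) + c := by
  have harea := setIntegral_le_mul_volume_transitionSet hc0 hc1 hvc
  rw [hv.setIntegral_one_sub hL, transitionSet_one_sub] at harea
  rw [add_comm]
  exact two_mul_sqrt_le_add hc0 measureReal_nonneg harea

lemma limit_mem_Icc (hv : Adm L σ v) {F : Filter ℝ} [F.NeBot] (hF : Ioo 0 L ∈ F)
    (ha : Tendsto v F (𝓝 a)) : a ∈ Icc (0 : ℝ) 1 :=
  isClosed_Icc.mem_of_tendsto ha (by filter_upwards [hF] with x hx using hv.1 x hx)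

section LowerBound

variable (hτ : τ ∈ Icc (0 : ℝ) 1) (hL : 0 < L) (hv : Adm L σ v)
  (ha : Tendsto v (𝓝[Ioo 0 L] 0) (𝓝 a)) (hb : Tendsto v (𝓝[Ioo 0 L] L) (𝓝 b))

include hL hv ha hb

lemma boundary_limits_mem_Icc : a ∈ Icc (0 : ℝ) 1 ∧ b ∈ Icc (0 : ℝ) 1 := by
  have := left_nhdsWithin_Ioo_neBot hL
  have := right_nhdsWithin_Ioo_neBot hL
  exact ⟨hv.limit_mem_Icc self_mem_nhdsWithin ha, hv.limit_mem_Icc self_mem_nhdsWithin hb⟩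

omit hL in
lemma abs_sub_add_abs_sub_add_abs_sub_le {x y : ℝ} (hx : x ∈ Ioo 0 L) (hy : y ∈ Ioo 0 L)
    (hxy : x ≤ y) :
    |a - v x| + |v x - v y| + |v y - b| ≤ (eVariationOn v (Ioo 0 L)).toReal := by
  have h := ENNReal.toReal_mono hv.2.1
    (edist_add_edist_add_edist_le_eVariationOn_Ioo ha hb hx hy hxy)
  rw [ENNReal.toReal_add (by finiteness) (by finiteness),
    ENNReal.toReal_add (by finiteness) (by finiteness)] at h
  simpa only [← dist_edist, Real.dist_eq] using h

include hτ

lemma abs_sub_le_halfVariation {x y : ℝ} (hx : x ∈ Ioo 0 L) (hy : y ∈ Ioo 0 L) :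
    |v x - v y| ≤ halfVariation τ L a b v := by
  wlog hxy : x ≤ y generalizing x y
  · rw [abs_sub_comm]
    exact this hy hx (le_of_not_ge hxy)
  obtain ⟨ha01, hb01⟩ := hv.boundary_limits_mem_Icc hL ha hb
  have hvar := hv.abs_sub_add_abs_sub_add_abs_sub_le ha hb hx hy hxy
  have hseam := abs_sub_le_phi hτ ha01 hb01
  have hloop : |v x - v y| ≤ |a - v x| + |a - b| + |v y - b| := by grind
  rw [halfVariation]
  linarith

lemma halfVariation_alternative :
    (∀ x ∈ Ioo 0 L, v x ≤ halfVariation τ L a b v) ∨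
    (∀ x ∈ Ioo 0 L, 1 - v x ≤ halfVariation τ L a b v) ∨
    min τ (1 - τ) ≤ halfVariation τ L a b v := by
  obtain ⟨ha01, hb01⟩ := hv.boundary_limits_mem_Icc hL ha hb
  have hseam := add_sub_overlap_le_phi hτ ha01 hb01
  have hvar {x : ℝ} (hx : x ∈ Ioo 0 L) :
      |a - v x| + |v x - b| ≤ (eVariationOn v (Ioo 0 L)).toReal := by
    simpa using hv.abs_sub_add_abs_sub_add_abs_sub_le ha hb hx hx le_rfl
  have hvar_seam : |a - b| ≤ (eVariationOn v (Ioo 0 L)).toReal :=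
    (abs_sub_le a _ b).trans (hvar ⟨half_pos hL, half_lt_self hL⟩)
  rw [halfVariation]
  rcases le_or_gt a τ with haτ | haτ <;> rcases le_or_gt b (1 - τ) with hbτ | hbτ
  · have : a + b ≤ phi τ a b := by grind
    refine Or.inl fun x hx ↦ ?_
    linarith [hvar hx, neg_abs_le (a - v x), le_abs_self (v x - b)]
  · have : a - b + 2 * (1 - τ) ≤ phi τ a b := by grind
    refine Or.inr (Or.inr (min_le_of_right_le ?_))
    linarith [neg_abs_le (a - b)]
  · have : b - a + 2 * τ ≤ phi τ a b := by grind
    refine Or.inr (Or.inr (min_le_of_left_le ?_))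
    linarith [le_abs_self (a - b)]
  · have : 2 - a - b ≤ phi τ a b := by grind
    refine Or.inr (Or.inl fun x hx ↦ ?_)
    linarith [hvar hx, le_abs_self (a - v x), neg_abs_le (v x - b)]

theorem min_competitors_le :
    min (min (4 * √(σ * L)) (4 * √((1 - σ) * L))) (min 2 (2 * (L + min τ (1 - τ))))
      ≤ Fvol L v + phi τ a b := by
  rw [Fvol_add_phi_eq]
  have hosc {x y : ℝ} (hx : x ∈ Ioo 0 L) (hy : y ∈ Ioo 0 L) :=
    (abs_le.mp (hv.abs_sub_le_halfVariation hτ hL ha hb hx hy)).2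
  have halt := hv.halfVariation_alternative hτ hL ha hb
  have hT0 := halfVariation_nonneg τ L a b v
  set T := halfVariation τ L a b v
  simp only [min_le_iff]
  rcases le_or_gt 1 T with hT1 | hT1
  · right; left
    linarith [measureReal_nonneg (μ := volume) (s := transitionSet L v)]
  have hsquare (hvT : ∀ x ∈ Ioo 0 L, v x ≤ T) :
      4 * √(σ * L) ≤ 2 * (volume.real (transitionSet L v) + T) := by
    linarith [hv.two_mul_sqrt_le_of_le hT0 hT1 hvT]
  have hhole (hvT : ∀ x ∈ Ioo 0 L, 1 - v x ≤ T) :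
      4 * √((1 - σ) * L) ≤ 2 * (volume.real (transitionSet L v) + T) := by
    linarith [hv.two_mul_sqrt_one_sub_le_of_one_sub_le hL.le hT0 hT1 hvT]
  by_cases! hzero : ∃ y ∈ Ioo 0 L, v y = 0
  · obtain ⟨y, hy, hvy⟩ := hzero
    exact Or.inl (Or.inl (hsquare fun x hx ↦ by linarith [hosc hx hy]))
  by_cases! hone : ∃ y ∈ Ioo 0 L, v y = 1
  · obtain ⟨y, hy, hvy⟩ := hone
    exact Or.inl (Or.inr (hhole fun x hx ↦ by linarith [hosc hy hx]))
  rcases halt with hvT | hvT | hT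
  · exact Or.inl (Or.inl (hsquare hvT))
  · exact Or.inl (Or.inr (hhole hvT))
  · right; right
    rw [hv.transitionSet_eq_Ioo hzero hone, Real.volume_real_Ioo_of_le hL.le]
    linarith

end LowerBound

end Adm

/-- The profile `r · χ_{(s, s+r)}` of a square of side `r`. -/
def squareProfile (s r : ℝ) : ℝ → ℝ :=
  indicator (Ioo s (s + r)) fun _ ↦ r

section SquareProfile

variable {τ σ L s r a b : ℝ}

lemma squareProfile_nonneg (hr : 0 ≤ r) (x : ℝ) : 0 ≤ squareProfile s r x :=
  indicator_nonneg (fun _ _ ↦ hr) x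

lemma squareProfile_le (hr : 0 ≤ r) (x : ℝ) : squareProfile s r x ≤ r :=
  indicator_apply_le' (fun _ ↦ le_rfl) fun _ ↦ hr

lemma squareProfile_of_le {x : ℝ} (hx : x ≤ s) : squareProfile s r x = 0 :=
  indicator_of_notMem (fun h ↦ h.1.not_ge hx) _

lemma squareProfile_of_ge {x : ℝ} (hx : s + r ≤ x) : squareProfile s r x = 0 :=
  indicator_of_notMem (fun h ↦ h.2.not_ge hx) _

lemma squareProfile_of_mem {x : ℝ} (hx : x ∈ Ioo s (s + r)) : squareProfile s r x = r :=
  indicator_of_mem hx _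

lemma monotoneOn_squareProfile (hr : 0 ≤ r) : MonotoneOn (squareProfile s r) (Iio (s + r)) := by
  intro x _ y hy hxy
  rcases le_or_gt x s with hxs | hxs
  · rw [squareProfile_of_le hxs]
    exact squareProfile_nonneg hr y
  · rw [squareProfile_of_mem ⟨hxs.trans_le hxy, hy⟩]
    exact squareProfile_le hr x

lemma antitoneOn_squareProfile (hr : 0 ≤ r) : AntitoneOn (squareProfile s r) (Ioi s) := by
  intro x hx y _ hxy
  rcases le_or_gt (s + r) y with hys | hys
  · rw [squareProfile_of_ge hys]
    exact squareProfile_nonneg hr x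
  · rw [squareProfile_of_mem ⟨hx, hxy.trans_lt hys⟩]
    exact squareProfile_le hr y

lemma eVariationOn_squareProfile (hr : 0 < r) (hs : 0 ≤ s) (hsL : s + r ≤ L) :
    eVariationOn (squareProfile s r) (Icc 0 L) = ENNReal.ofReal (2 * r) := by
  have hmid : s + r / 2 ∈ Ioo s (s + r) := ⟨by linarith, by linarith⟩
  rw [eVariationOn_Icc_of_monotoneOn_of_antitoneOn (c := s + r / 2) (by linarith) (by linarith)
      ((monotoneOn_squareProfile hr.le).mono fun x hx ↦ hx.2.trans_lt hmid.2)
      ((antitoneOn_squareProfile hr.le).mono fun x hx ↦ hmid.1.trans_le hx.1),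
    squareProfile_of_le hs, squareProfile_of_ge hsL, squareProfile_of_mem hmid, sub_zero,
    ← ENNReal.ofReal_add hr.le hr.le, two_mul]

lemma boundedVariationOn_squareProfile (hr : 0 < r) (hs : 0 ≤ s) (hsL : s + r ≤ L) :
    BoundedVariationOn (squareProfile s r) (Icc 0 L) := by
  rw [BoundedVariationOn, eVariationOn_squareProfile hr hs hsL]
  exact ENNReal.ofReal_ne_top

lemma adm_squareProfile (hr : 0 < r) (hr1 : r ≤ 1) (hs : 0 ≤ s) (hsL : s + r ≤ L)
    (harea : r * r = σ * L) : Adm L σ (squareProfile s r) := by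
  refine ⟨fun x _ ↦ ⟨squareProfile_nonneg hr.le x, (squareProfile_le hr.le x).trans hr1⟩,
    (boundedVariationOn_squareProfile hr hs hsL).mono Ioo_subset_Icc_self, ?_⟩
  rw [squareProfile, setIntegral_indicator measurableSet_Ioo,
    inter_eq_right.mpr (Ioo_subset_Ioo hs hsL), setIntegral_const,
    Real.volume_real_Ioo_of_le (by linarith), smul_eq_mul, add_sub_cancel_left, harea]

lemma exists_tendsto_squareProfile (hr : 0 < r) (hs : 0 ≤ s) (hsL : s + r ≤ L) :
    ∃ a b, Tendsto (squareProfile s r) (𝓝[Ioo 0 L] 0) (𝓝 a) ∧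
      Tendsto (squareProfile s r) (𝓝[Ioo 0 L] L) (𝓝 b) := by
  have hbv := (boundedVariationOn_squareProfile hr hs hsL).mono Ioo_subset_Icc_self
  obtain ⟨a, ha⟩ := hbv.exists_tendsto_right 0
  obtain ⟨b, hb⟩ := hbv.exists_tendsto_left L
  rw [inter_eq_left.mpr fun x hx ↦ hx.1] at ha
  rw [inter_eq_left.mpr fun x hx ↦ hx.2] at hb
  exact ⟨a, b, ha, hb⟩

lemma volume_real_transitionSet_squareProfile_le (hr : 0 ≤ r) :
    volume.real (transitionSet L (squareProfile s r)) ≤ r := by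
  have hsub : transitionSet L (squareProfile s r) ⊆ Ioo s (s + r) := fun x hx ↦
    mem_of_indicator_ne_zero hx.2.1.ne'
  refine (measureReal_mono hsub measure_Ioo_lt_top.ne).trans_eq ?_
  rw [Real.volume_real_Ioo_of_le (by linarith), add_sub_cancel_left]

/- As the profile vanishes at `0` and `L`, its jumps there are exactly the limits `a` and `b`, so
that `φ_τ(a, b) ≤ a + b` completes the variation on `(0, L)` to that on `[0, L]`. -/
lemma Fvol_add_phi_squareProfile_le (hτ : τ ∈ Icc (0 : ℝ) 1) (hr : 0 < r) (hs : 0 ≤ s)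
    (hsL : s + r ≤ L) (ha01 : a ∈ Icc (0 : ℝ) 1) (hb01 : b ∈ Icc (0 : ℝ) 1)
    (ha : Tendsto (squareProfile s r) (𝓝[Ioo 0 L] 0) (𝓝 a))
    (hb : Tendsto (squareProfile s r) (𝓝[Ioo 0 L] L) (𝓝 b)) :
    Fvol L (squareProfile s r) + phi τ a b ≤ 4 * r := by
  have hvar : (eVariationOn (squareProfile s r) (Ioo 0 L)).toReal + a + b = 2 * r := by
    have h := eVariationOn_Icc_eq_Ioo_add_edist_add_edist (by linarith) ha hb
    rw [eVariationOn_squareProfile hr hs hsL, squareProfile_of_le hs,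
      squareProfile_of_ge hsL] at h
    have hbv := (boundedVariationOn_squareProfile hr hs hsL).mono Ioo_subset_Icc_self
    apply_fun ENNReal.toReal at h
    rw [ENNReal.toReal_add (by finiteness) (by finiteness),
      ENNReal.toReal_add hbv (by finiteness), ENNReal.toReal_ofReal (by linarith)] at h
    simpa [← dist_edist, Real.dist_eq, abs_of_nonneg ha01.1, abs_of_nonneg hb01.1] using h.symm
  rw [Fvol_add_phi_eq, halfVariation]
  linarith [phi_le_add hτ ha01 hb01,
    volume_real_transitionSet_squareProfile_le (L := L) (s := s) hr.le]

end SquareProfile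

theorem periodic_min_small_domain_small_fraction_general (τ σ L : ℝ)
    (hτ : τ ∈ Icc (0 : ℝ) 1) (hL : 0 < L) (hσ : 0 < σ)
    (hhole : σ ≤ 1 / 2) (hstripe : σ * L ≤ 1 / 4)
    (hlayer : 2 * √(σ * L) ≤ L + min τ (1 - τ)) :
    (∀ v : ℝ → ℝ, ∀ a b : ℝ, Adm L σ v →
        Tendsto v (𝓝[Ioo 0 L] 0) (𝓝 a) → Tendsto v (𝓝[Ioo 0 L] L) (𝓝 b) →
        4 * √(σ * L) ≤ Fvol L v + phi τ a b) ∧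
    (∀ s : ℝ, 0 ≤ s → s ≤ L - √(σ * L) →
      Adm L σ (squareProfile s √(σ * L)) ∧
      ∃ a b : ℝ,
        Tendsto (squareProfile s √(σ * L)) (𝓝[Ioo 0 L] 0) (𝓝 a) ∧
        Tendsto (squareProfile s √(σ * L)) (𝓝[Ioo 0 L] L) (𝓝 b) ∧
        Fvol L (squareProfile s √(σ * L)) + phi τ a b = 4 * √(σ * L)) := by
  have hσL : 0 < σ * L := mul_pos hσ hL
  have hr : √(σ * L) ≤ 1 / 2 := Real.sqrt_le_iff.mpr ⟨by norm_num, by linarith⟩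
  have hlower (v : ℝ → ℝ) (a b : ℝ) (hv : Adm L σ v) (ha : Tendsto v (𝓝[Ioo 0 L] 0) (𝓝 a))
      (hb : Tendsto v (𝓝[Ioo 0 L] L) (𝓝 b)) : 4 * √(σ * L) ≤ Fvol L v + phi τ a b := by
    have hsquare_le_hole : √(σ * L) ≤ √((1 - σ) * L) := by gcongr; linarith
    refine le_trans ?_ (hv.min_competitors_le hτ hL ha hb)
    refine le_min (le_min le_rfl ?_) (le_min ?_ ?_) <;> linarith
  refine ⟨hlower, fun s hs hsL ↦ ?_⟩
  have hr0 : 0 < √(σ * L) := Real.sqrt_pos.mpr hσL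
  have hsL' : s + √(σ * L) ≤ L := by linarith
  have hadm : Adm L σ (squareProfile s √(σ * L)) :=
    adm_squareProfile hr0 (by linarith) hs hsL' (Real.mul_self_sqrt hσL.le)
  obtain ⟨a, b, ha, hb⟩ := exists_tendsto_squareProfile hr0 hs hsL'
  obtain ⟨ha01, hb01⟩ := hadm.boundary_limits_mem_Icc hL ha hb
  exact ⟨hadm, a, b, ha, hb, le_antisymm
    (Fvol_add_phi_squareProfile_le hτ hr0 hs hsL' ha01 hb01 ha hb) (hlower _ a b hadm ha hb)⟩

/-- Periodic minimum problem in small domains with small volume fraction: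
for `0 < L ≤ min{τ,1−τ}` and `0 < σ < L` the least value of
`E^#_τ(v) = Fvol L v + φ_τ(v(0⁺), v(L⁻))` over `Adm(L,σ)` is `4√(σL)`, attained by
`v = √(σL)·χ_{(s, s+√(σL))}` for any `0 ≤ s ≤ L − √(σL)`. -/
theorem periodic_min_small_domain_small_fraction (τ σ L : ℝ)
    (hτ : τ ∈ Set.Ioo (0 : ℝ) 1) (hL0 : 0 < L) (hL : L ≤ min τ (1 - τ))
    (hσ1 : 0 < σ) (hσ2 : σ < L) :
    (∀ v : ℝ → ℝ, ∀ a b : ℝ, Adm L σ v →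
        Tendsto v (nhdsWithin 0 (Set.Ioo 0 L)) (nhds a) →
        Tendsto v (nhdsWithin L (Set.Ioo 0 L)) (nhds b) →
        4 * Real.sqrt (σ * L) ≤ Fvol L v + phi τ a b) ∧
    (∀ s : ℝ, 0 ≤ s → s ≤ L - Real.sqrt (σ * L) →
      Adm L σ (Set.indicator (Set.Ioo s (s + Real.sqrt (σ * L)))
          (fun _ => Real.sqrt (σ * L))) ∧
      ∃ a b : ℝ,
        Tendsto (Set.indicator (Set.Ioo s (s + Real.sqrt (σ * L)))
            (fun _ => Real.sqrt (σ * L)))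
          (nhdsWithin 0 (Set.Ioo 0 L)) (nhds a) ∧
        Tendsto (Set.indicator (Set.Ioo s (s + Real.sqrt (σ * L)))
            (fun _ => Real.sqrt (σ * L)))
          (nhdsWithin L (Set.Ioo 0 L)) (nhds b) ∧
        Fvol L (Set.indicator (Set.Ioo s (s + Real.sqrt (σ * L)))
            (fun _ => Real.sqrt (σ * L))) + phi τ a b = 4 * Real.sqrt (σ * L)) := by
  have hL' := le_min_iff.mp hL
  have hlayer : √(σ * L) ≤ L := Real.sqrt_le_iff.mpr ⟨hL0.le, by nlinarith⟩
  exact periodic_min_small_domain_small_fraction_general τ σ L (Ioo_subset_Icc_self hτ) hL0 hσ1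
    (by linarith) (by nlinarith) (by linarith)
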